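/- Fix constants g > 0 and N₀ > 0. For any α ∈ ℝ and any β ≥ 0, the function (p, B) ↦ α·p − β·B·log₂(1 + p·g/(N₀·B)) is convex on the open positive quadrant {(p,B) ∈ ℝ × ℝ : p > 0 and B > 0}. -/

import Mathlib

/-!
In terms of the power density `s = p / B`, the rate is `B * log₂ (1 + s * g / N₀)`, which is the
perspective of the concave function `s ↦ log₂ (1 + s * g / N₀)`. Perspectives of concave functions
are jointly concave, because `(a • x + b • y) / (a * t + b * u)` is a convex combination of `x / t`
and `y / u`, with weights proportional to `a * t` and `b * u`.
-/

section Perspective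

variable {𝕜 E F : Type*}

/-- The perspective `(x, t) ↦ t f(x / t)` of a function `f` on a vector space, meant for scales
`t > 0`. Its concavity in `(x, t)` jointly is inherited from that of `f`. -/
def perspective [Inv 𝕜] [SMul 𝕜 E] [SMul 𝕜 F] (f : E → F) (x : E × 𝕜) : F :=
  x.2 • f (x.2⁻¹ • x.1)

variable [Semifield 𝕜] [AddCommMonoid E] [Module 𝕜 E]

theorem inv_smul_smul_add_smul {t u : 𝕜} (ht : t ≠ 0) (hu : u ≠ 0) (a b : 𝕜) (x y : E) :
    (a * t + b * u)⁻¹ • (a • x + b • y) =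
      (a * t / (a * t + b * u)) • t⁻¹ • x + (b * u / (a * t + b * u)) • u⁻¹ • y := by
  simp only [smul_add, smul_smul]
  congr 2 <;> field_simp

variable [LinearOrder 𝕜] [IsStrictOrderedRing 𝕜]

theorem convex_perspective_domain {s : Set E} (hs : Convex 𝕜 s) :
    Convex 𝕜 {x : E × 𝕜 | 0 < x.2 ∧ x.2⁻¹ • x.1 ∈ s} := by
  rintro ⟨x, t⟩ ⟨ht : 0 < t, hx : t⁻¹ • x ∈ s⟩ ⟨y, u⟩ ⟨hu : 0 < u, hy : u⁻¹ • y ∈ s⟩ a b ha hb hab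
  have hT : 0 < a * t + b * u := convex_Ioi (0 : 𝕜) ht hu ha hb hab
  have hmem : (a * t + b * u)⁻¹ • (a • x + b • y) ∈ s := by
    rw [inv_smul_smul_add_smul ht.ne' hu.ne']
    exact hs hx hy (by positivity) (by positivity) (by rw [← add_div, div_self hT.ne'])
  exact ⟨hT, hmem⟩

theorem concaveOn_perspective [AddCommMonoid F] [PartialOrder F] [Module 𝕜 F] [PosSMulMono 𝕜 F]
    {s : Set E} {f : E → F} (hf : ConcaveOn 𝕜 s f) :
    ConcaveOn 𝕜 {x : E × 𝕜 | 0 < x.2 ∧ x.2⁻¹ • x.1 ∈ s} (perspective f) := by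
  refine ⟨convex_perspective_domain hf.1, ?_⟩
  rintro ⟨x, t⟩ ⟨ht : 0 < t, hx : t⁻¹ • x ∈ s⟩ ⟨y, u⟩ ⟨hu : 0 < u, hy : u⁻¹ • y ∈ s⟩ a b ha hb hab
  set T := a * t + b * u
  have hT : 0 < T := convex_Ioi (0 : 𝕜) ht hu ha hb hab
  have hweights : a * t / T + b * u / T = 1 := by rw [← add_div, div_self hT.ne']
  calc
    a • t • f (t⁻¹ • x) + b • u • f (u⁻¹ • y)
        = T • ((a * t / T) • f (t⁻¹ • x) + (b * u / T) • f (u⁻¹ • y)) := by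
      simp only [smul_add, smul_smul, mul_div_cancel₀ _ hT.ne']
    _ ≤ T • f ((a * t / T) • t⁻¹ • x + (b * u / T) • u⁻¹ • y) :=
      smul_le_smul_of_nonneg_left
        (hf.2 hx hy (by positivity) (by positivity) hweights) hT.le
    _ = T • f (T⁻¹ • (a • x + b • y)) := by
      rw [inv_smul_smul_add_smul ht.ne' hu.ne']

end Perspective

theorem concaveOn_logb {b : ℝ} (hb : 1 < b) : ConcaveOn ℝ (Set.Ioi 0) (Real.logb b) :=
  (strictConcaveOn_log_Ioi.concaveOn.smul (inv_nonneg.2 (Real.log_pos hb).le)).congr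
    fun x _ => (div_eq_inv_mul (Real.log x) (Real.log b)).symm

theorem concaveOn_logb_one_add_mul {b : ℝ} (hb : 1 < b) (c : ℝ) :
    ConcaveOn ℝ {s : ℝ | 0 < 1 + s * c} (fun s => Real.logb b (1 + s * c)) :=
  ((concaveOn_logb hb).translate_right 1).comp_linearMap (LinearMap.mulRight ℝ c)

/-- The uplink transmission rate `r(p, B) = B log₂(1 + p g / (N₀ B))` of a device with transmission
power `p = x.1` and bandwidth `B = x.2`, for channel gain `g` and noise power spectral density
`N₀`. -/
noncomputable def uplinkRate (g N₀ : ℝ) (x : ℝ × ℝ) : ℝ :=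
  x.2 * Real.logb 2 (1 + x.1 * g / (N₀ * x.2))

theorem uplinkRate_eq_perspective (g N₀ : ℝ) :
    uplinkRate g N₀ = perspective fun s : ℝ => Real.logb 2 (1 + s * (g / N₀)) := by
  funext x
  have hsnr : x.1 * g / (N₀ * x.2) = x.2⁻¹ * x.1 * (g / N₀) := by ring
  simp only [uplinkRate, perspective, smul_eq_mul, hsnr]

theorem one_add_inv_mul_mul_div_pos_iff {g N₀ p B : ℝ} (hN₀ : 0 < N₀) (hB : 0 < B) :
    0 < 1 + B⁻¹ * p * (g / N₀) ↔ 0 < N₀ * B + p * g := by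
  have hfactor : N₀ * B + p * g = N₀ * B * (1 + B⁻¹ * p * (g / N₀)) := by field_simp
  rw [hfactor, mul_pos_iff_of_pos_left (mul_pos hN₀ hB)]

theorem concaveOn_uplinkRate (g : ℝ) {N₀ : ℝ} (hN₀ : 0 < N₀) :
    ConcaveOn ℝ {x : ℝ × ℝ | 0 < x.2 ∧ 0 < N₀ * x.2 + x.1 * g} (uplinkRate g N₀) := by
  have hdomain : {x : ℝ × ℝ | 0 < x.2 ∧ 0 < N₀ * x.2 + x.1 * g} =
      {x : ℝ × ℝ | 0 < x.2 ∧ x.2⁻¹ • x.1 ∈ {s : ℝ | 0 < 1 + s * (g / N₀)}} :=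
    Set.ext fun _ => and_congr_right fun hB => (one_add_inv_mul_mul_div_pos_iff hN₀ hB).symm
  rw [hdomain, uplinkRate_eq_perspective]
  exact concaveOn_perspective (concaveOn_logb_one_add_mul one_lt_two (g / N₀))

theorem parametric_objective_convexOn_general (g N₀ α β : ℝ) (hN₀ : 0 < N₀) (hβ : 0 ≤ β) :
    ConvexOn ℝ {x : ℝ × ℝ | 0 < x.2 ∧ 0 < N₀ * x.2 + x.1 * g}
      (fun x : ℝ × ℝ =>
        α * x.1 - β * (x.2 * Real.logb 2 (1 + x.1 * g / (N₀ * x.2)))) := by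
  have hrate := concaveOn_uplinkRate g hN₀
  have hpower := (α • LinearMap.fst ℝ ℝ ℝ).convexOn hrate.1
  exact hpower.sub (hrate.smul hβ)

/-- the per-device term of the objective of P₇,
`(p,B) ↦ α·p − β·B·log₂(1 + p·g/(N₀·B))`, is convex on the open positive
quadrant. -/
theorem parametric_objective_convexOn (g N₀ α β : ℝ)
    (hg : 0 < g) (hN₀ : 0 < N₀) (hβ : 0 ≤ β) :
    ConvexOn ℝ {x : ℝ × ℝ | 0 < x.1 ∧ 0 < x.2}
      (fun x : ℝ × ℝ =>
        α * x.1 - β * (x.2 * Real.logb 2 (1 + x.1 * g / (N₀ * x.2)))) :=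
  (parametric_objective_convexOn_general g N₀ α β hN₀ hβ).subset
    (fun _ ⟨hp, hB⟩ => ⟨hB, add_pos (mul_pos hN₀ hB) (mul_pos hp hg)⟩)
    ((convex_Ioi 0).prod (convex_Ioi 0))
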